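/- arXiv:1812.09564 — 4 statements merged into one kernel-verified Lean document; each statement's English description precedes it below -/
import Mathlib

section
/- Every multiplicative sublattice of co-rank k in ℤ^{n+k} is of the form g(L), where g : ℤ^n → ℤ^{n+k} is an acceptable map and L is a multiplicative sublattice of full rank n in ℤ^n. -/
/-- A sublattice of `ℤ^m` is multiplicative if it is closed under componentwise
multiplication. -/
def IsMulClosed {m : ℕ} (L : Submodule ℤ (Fin m → ℤ)) : Prop :=
  ∀ u ∈ L, ∀ v ∈ L, u * v ∈ L

/-- An acceptable map `ℤ^n → ℤ^{n+k}` is an injective map each of whose output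
coordinates is either one of the input coordinates or identically `0`. -/
def IsAcceptable {n k : ℕ} (g : (Fin n → ℤ) → (Fin (n + k) → ℤ)) : Prop :=
  Function.Injective g ∧
    ∀ j : Fin (n + k), (∃ i : Fin n, ∀ x, g x j = x i) ∨ ∀ x, g x j = 0

/-- Dedekind independence for distinct nonzero semigroup homomorphisms. -/
theorem dedekind_aux {M ι : Type*} [Semigroup M] [Fintype ι] (χ : ι → (M →ₙ* ℤ))
    (hinj : Function.Injective χ) (hne : ∀ i, ∃ x, χ i x ≠ 0)
    (c : ι → ℤ) (h : ∀ x, ∑ i, c i * χ i x = 0) : ∀ i, c i = 0 := by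
  classical
  let z : M →ₙ* ℤ := { toFun := fun _ => 0, map_mul' := by intros; simp }
  let ψ : Option ι → (M →ₙ* ℤ) := fun o => o.elim z χ
  have hψ : Function.Injective ψ := by
    rintro (_ | a) (_ | b) hab
    · rfl
    · exfalso
      obtain ⟨x, hx⟩ := hne b
      exact hx (DFunLike.congr_fun hab x).symm
    · exfalso
      obtain ⟨x, hx⟩ := hne a
      exact hx (DFunLike.congr_fun hab x)
    · exact congrArg some (hinj hab)
  have hli := (linearIndependent_monoidHom (WithOne M) ℤ).comp
    (fun o => WithOne.lift (ψ o)) (WithOne.lift.injective.comp hψ)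
  rw [Fintype.linearIndependent_iff] at hli
  intro i
  refine hli (fun o => o.elim (-∑ i, c i) c) ?_ (some i)
  funext x
  rw [Fintype.sum_option]
  refine WithOne.cases_on x ?_ fun a => ?_
  · simp
  · have := h a
    simpa [ψ, z] using this

/-- Every multiplicative sublattice of co-rank `k` in `ℤ^{n+k}` is the image of a full
rank multiplicative sublattice of `ℤ^n` under an acceptable map. -/
theorem rigidity_acceptable (n k : ℕ) (L' : Submodule ℤ (Fin (n + k) → ℤ))
    (hmul : IsMulClosed L') (hrank : Module.finrank ℤ L' = n) :
    ∃ g : (Fin n → ℤ) → (Fin (n + k) → ℤ), ∃ L : Submodule ℤ (Fin n → ℤ),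
      IsAcceptable g ∧ IsMulClosed L ∧ Module.finrank ℤ L = n ∧
      (L' : Set (Fin (n + k) → ℤ)) = g '' (L : Set (Fin n → ℤ)) := by
  classical
  let χ : Fin (n + k) → (L' →ₗ[ℤ] ℤ) := fun j => (LinearMap.proj j).comp L'.subtype
  have hχ : ∀ j (v : L'), χ j v = v.1 j := fun _ _ => rfl
  let S : Finset (L' →ₗ[ℤ] ℤ) := (Finset.univ.image χ).filter (· ≠ 0)
  have hS : ∀ s : S, s.1 ≠ 0 ∧ ∃ j, χ j = s.1 := by
    rintro ⟨s, hs⟩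
    simp only [S, Finset.mem_filter, Finset.mem_image, Finset.mem_univ, true_and] at hs
    exact ⟨hs.2, hs.1⟩
  have hS' : ∀ j, χ j ≠ 0 → χ j ∈ S := by
    intro j hj
    simp [S, hj]
  let sg : Semigroup L' :=
    { mul := fun u v => ⟨u.1 * v.1, hmul _ u.2 _ v.2⟩
      mul_assoc := fun u v w => Subtype.ext (mul_assoc u.1 v.1 w.1) }
  have hSm : ∀ (s : S) (u v : L'), s.1 (u * v) = s.1 u * s.1 v := by
    intro s u v
    obtain ⟨-, j, hj⟩ := hS s
    rw [← hj]
    rfl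
  have hli : LinearIndependent ℤ (fun s : S => s.1) := by
    rw [Fintype.linearIndependent_iff]
    intro c hc
    refine dedekind_aux (fun s : S => ({ toFun := s.1, map_mul' := hSm s } : L' →ₙ* ℤ))
      ?_ ?_ c ?_
    · intro a b hab
      apply Subtype.ext
      ext x
      exact DFunLike.congr_fun hab x
    · intro s
      by_contra! hcon
      exact (hS s).1 (LinearMap.ext hcon)
    · intro x
      have := LinearMap.congr_fun hc x
      simpa using this
  let φ : L' →ₗ[ℤ] (S → ℤ) := LinearMap.pi (fun s => s.1)
  have hφ : Function.Injective φ := by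
    intro u v huv
    apply Subtype.ext
    funext j
    rw [← hχ, ← hχ]
    by_cases h0 : χ j = 0
    · simp [h0]
    · exact congrFun huv ⟨χ j, hS' j h0⟩
  have hcard : Fintype.card S = n := by
    apply le_antisymm
    · have := hli.fintype_card_le_finrank
      rwa [Module.finrank_linearMap_self, hrank] at this
    · have := LinearMap.finrank_le_finrank_of_injective hφ
      rwa [hrank, Module.finrank_fintype_fun_eq_card] at this
  let e : Fin n ≃ S := (Fintype.equivFinOfCardEq hcard).symm
  let Φ : L' →ₗ[ℤ] (Fin n → ℤ) := LinearMap.pi (fun i => (e i).1)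
  have hΦ : Function.Injective Φ := by
    intro u v huv
    apply hφ
    funext s
    have := congrFun huv (e.symm s)
    simpa [Φ, φ] using this
  let g : (Fin n → ℤ) → (Fin (n + k) → ℤ) := fun x j =>
    if h : χ j = 0 then 0 else x (e.symm ⟨χ j, hS' j h⟩)
  have hg : ∀ v, g (Φ v) = v.1 := by
    intro v
    funext j
    rw [← hχ]
    by_cases h0 : χ j = 0
    · simp [g, h0]
    · simp [g, h0, Φ]
  refine ⟨g, LinearMap.range Φ, ⟨?_, ?_⟩, ?_, ?_, ?_⟩
  · intro x y hxy
    funext i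
    obtain ⟨h0, j, hj⟩ := hS (e i)
    have h1 : χ j ≠ 0 := hj ▸ h0
    have h2 : e.symm ⟨χ j, hS' j h1⟩ = i := by
      rw [Equiv.symm_apply_eq]
      exact Subtype.ext hj
    have := congrFun hxy j
    simpa only [g, dif_neg h1, h2] using this
  · intro j
    by_cases h0 : χ j = 0
    · right
      intro x
      simp [g, h0]
    · left
      exact ⟨e.symm ⟨χ j, hS' j h0⟩, fun x => by simp [g, h0]⟩
  · rintro _ ⟨u, rfl⟩ _ ⟨v, rfl⟩
    exact ⟨u * v, funext fun i => hSm (e i) u v⟩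
  · rw [LinearMap.finrank_range_of_inj hΦ, hrank]
  · ext v
    constructor
    · intro hv
      exact ⟨Φ ⟨v, hv⟩, ⟨_, rfl⟩, hg _⟩
    · rintro ⟨_, ⟨u, rfl⟩, rfl⟩
      rw [hg]
      exact u.2
end

section
/- Every multiplicative sublattice of co-rank k in ℤ^{n+k} is of the form g(L), where g : ℤ^n → ℤ^{n+k} is an ordered acceptable map and L is a multiplicative sublattice of full rank n in ℤ^n; moreover, such g and L are uniquely determined by the sublattice. -/
open Classical in
/-- `A_i^g`: the set of output coordinates of `g` carrying the input coordinate `x i`. -/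
noncomputable def coordSet {n k : ℕ} (g : (Fin n → ℤ) → (Fin (n + k) → ℤ))
    (i : Fin n) : Finset (Fin (n + k)) :=
  Finset.univ.filter fun j => ∀ x, g x j = x i

/-- An acceptable map `g` is ordered if `min A_i^g < min A_j^g` whenever `i < j`. -/
def IsOrdered {n k : ℕ} (g : (Fin n → ℤ) → (Fin (n + k) → ℤ)) : Prop :=
  ∀ i₁ i₂ : Fin n, i₁ < i₂ → (coordSet g i₁).min < (coordSet g i₂).min


/-- The coordinates that are not identically zero on `L` and minimal in their class. -/
def repSet {m : ℕ} (L : Submodule ℤ (Fin m → ℤ)) : Set (Fin m) :=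
  {j | (∃ v ∈ L, v j ≠ 0) ∧ ∀ j' < j, ∃ v ∈ L, v j' ≠ v j}

lemma repSet_sep {m : ℕ} {L : Submodule ℤ (Fin m → ℤ)} {a b : Fin m}
    (ha : a ∈ repSet L) (hb : b ∈ repSet L) (h : ∀ v ∈ L, v a = v b) : a = b := by
  rcases lt_trichotomy a b with hlt | heq | hlt
  · obtain ⟨v, hv, hne⟩ := hb.2 a hlt
    exact absurd (h v hv) hne
  · exact heq
  · obtain ⟨v, hv, hne⟩ := ha.2 b hlt
    exact absurd (h v hv).symm hne

lemma exists_rep {m : ℕ} (L : Submodule ℤ (Fin m → ℤ)) (j : Fin m)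
    (hj : ∃ v ∈ L, v j ≠ 0) :
    ∃ a ∈ repSet L, a ≤ j ∧ ∀ v ∈ L, v j = v a := by
  induction j using WellFoundedLT.induction with
  | ind j ih =>
    by_cases h : ∀ j' < j, ∃ v ∈ L, v j' ≠ v j
    · exact ⟨j, ⟨hj, h⟩, le_rfl, fun _ _ => rfl⟩
    · push Not at h
      obtain ⟨j', hlt, he⟩ := h
      obtain ⟨v, hv, hne⟩ := hj
      obtain ⟨a, ha, hle, hav⟩ := ih j' hlt ⟨v, hv, by rwa [he v hv]⟩
      exact ⟨a, ha, hle.trans hlt.le, fun w hw => by rw [← he w hw, hav w hw]⟩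

/-- The submonoid `{1} ∪ L`. -/
def unitHull {m : ℕ} (L : Submodule ℤ (Fin m → ℤ)) (hL : IsMulClosed L) :
    Submonoid (Fin m → ℤ) where
  carrier := {v | v = 1 ∨ v ∈ L}
  one_mem' := Or.inl rfl
  mul_mem' := by
    rintro a b (rfl | ha) (rfl | hb)
    · left; simp
    · right; simpa using hb
    · right; simpa using ha
    · right; exact hL a ha b hb

/-- Coordinate as a character of the hull. -/
def coordChar {m : ℕ} (L : Submodule ℤ (Fin m → ℤ)) (hL : IsMulClosed L) (j : Fin m) :
    unitHull L hL →* ℤ :=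
  (Pi.evalMonoidHom (fun _ : Fin m => ℤ) j).comp (unitHull L hL).subtype

/-- Coordinate as a functional on `L`. -/
def coordFun {m : ℕ} (L : Submodule ℤ (Fin m → ℤ)) (j : Fin m) : Module.Dual ℤ L :=
  (LinearMap.proj j).comp L.subtype

lemma coord_indep {m : ℕ} (L : Submodule ℤ (Fin m → ℤ)) (hL : IsMulClosed L) :
    LinearIndependent ℤ (fun j : repSet L => coordFun L j) := by
  classical
  have hinj : Function.Injective (fun j : repSet L => coordChar L hL j) := by
    intro a b h
    apply Subtype.ext
    apply repSet_sep a.2 b.2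
    intro v hv
    exact DFunLike.congr_fun h (⟨v, Or.inr hv⟩ : unitHull L hL)
  have hli := (linearIndependent_monoidHom (unitHull L hL) ℤ).comp _ hinj
  rw [Fintype.linearIndependent_iff] at hli ⊢
  intro c hc i
  obtain ⟨v, hv, hne⟩ := i.2.1
  have key := hli (fun j => c j * v j) (by
    funext w
    have hw : v * (w : Fin m → ℤ) ∈ L := by
      rcases w.2 with h | h
      · rw [h, mul_one]; exact hv
      · exact hL v hv _ h
    have := DFunLike.congr_fun hc ⟨_, hw⟩
    simp only [LinearMap.sum_apply, LinearMap.smul_apply, LinearMap.zero_apply] at this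
    simp only [Finset.sum_apply, Pi.smul_apply, Pi.zero_apply, Function.comp, smul_eq_mul]
    rw [← this]
    refine Finset.sum_congr rfl fun j _ => ?_
    simp [coordChar, coordFun, mul_assoc]) i
  exact (mul_eq_zero.mp key).resolve_right hne

lemma card_repSet {m : ℕ} (L : Submodule ℤ (Fin m → ℤ)) (hL : IsMulClosed L) :
    Nat.card (repSet L) = Module.finrank ℤ L := by
  classical
  apply le_antisymm
  · have h := (coord_indep L hL).fintype_card_le_finrank
    rw [Module.finrank_linearMap_self] at h
    rwa [Nat.card_eq_fintype_card]
  · let r : L →ₗ[ℤ] (repSet L → ℤ) := LinearMap.pi fun j => coordFun L j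
    have hr : Function.Injective r := by
      intro u v h
      apply Subtype.ext
      funext j
      by_cases hj : ∃ v ∈ L, v j ≠ 0
      · obtain ⟨a, ha, -, hav⟩ := exists_rep L j hj
        rw [hav _ u.2, hav _ v.2]
        exact congrFun h ⟨a, ha⟩
      · push Not at hj
        rw [hj _ u.2, hj _ v.2]
    have := LinearMap.finrank_le_finrank_of_injective hr
    rwa [Module.finrank_fintype_fun_eq_card, ← Nat.card_eq_fintype_card] at this

lemma functional_zero {n : ℕ} (L : Submodule ℤ (Fin n → ℤ))
    (hL : Module.finrank ℤ L = n) (f : (Fin n → ℤ) →ₗ[ℤ] ℤ)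
    (hf : ∀ v ∈ L, f v = 0) : f = 0 := by
  have h1 := Submodule.finrank_quotient_add_finrank (LinearMap.ker f)
  rw [f.quotKerEquivRange.finrank_eq] at h1
  have h2 : Module.finrank ℤ L ≤ Module.finrank ℤ (LinearMap.ker f) :=
    Submodule.finrank_mono hf
  rw [Module.finrank_fin_fun] at h1
  have h3 : Module.finrank ℤ (LinearMap.range f) = 0 := by omega
  rw [Submodule.finrank_eq_zero] at h3
  exact LinearMap.range_eq_bot.mp h3

lemma solution_struct {n k : ℕ} (L' : Submodule ℤ (Fin (n + k) → ℤ))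
    (g : (Fin n → ℤ) → (Fin (n + k) → ℤ)) (L : Submodule ℤ (Fin n → ℤ))
    (hg : IsAcceptable g) (ho : IsOrdered g) (hL : Module.finrank ℤ L = n)
    (him : (L' : Set (Fin (n + k) → ℤ)) = g '' (L : Set (Fin n → ℤ))) :
    ∃ m : Fin n → Fin (n + k), StrictMono m ∧ Set.range m = repSet L' ∧
      ∀ j, (∃ i, (∀ x, g x j = x i) ∧ ∀ v ∈ L', v j = v (m i)) ∨
        ((∀ x, g x j = 0) ∧ ∀ v ∈ L', v j = 0) := by
  classical
  have hmem : ∀ x ∈ L, g x ∈ L' := fun x hx => by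
    rw [← SetLike.mem_coe, him]; exact ⟨x, hx, rfl⟩
  have hex : ∀ v ∈ L', ∃ x ∈ L, g x = v := fun v hv => by
    rw [← SetLike.mem_coe, him] at hv; exact hv
  have hne : ∀ i, (coordSet g i).Nonempty := by
    intro i
    by_contra hcon
    rw [Finset.not_nonempty_iff_eq_empty] at hcon
    have : g (Pi.single i 1) = g 0 := by
      funext j
      rcases hg.2 j with ⟨i', h⟩ | h
      · have hi : i' ≠ i := by
          rintro rfl
          have : j ∈ coordSet g i' := by simpa [coordSet] using h
          simp [hcon] at this
        rw [h, h]
        simp [hi]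
      · rw [h, h]
    have := congrFun (hg.1 this) i
    simp at this
  let m : Fin n → Fin (n + k) := fun i => (coordSet g i).min' (hne i)
  have hm : ∀ i x, g x (m i) = x i := by
    intro i
    have h : m i ∈ coordSet g i := Finset.min'_mem _ (hne i)
    exact (Finset.mem_filter.mp h).2
  have hmle : ∀ i j, (∀ x, g x j = x i) → m i ≤ j := by
    intro i j h
    exact Finset.min'_le _ _ (by simpa [coordSet] using h)
  have hsep : ∀ i i', (∀ x ∈ L, x i = x i') → i = i' := by
    intro i i' h
    by_contra hii
    let p : Fin n → ((Fin n → ℤ) →ₗ[ℤ] ℤ) := fun i => LinearMap.proj i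
    have h0 := functional_zero L hL (p i - p i')
      (fun v hv => sub_eq_zero.mpr (h v hv))
    have := DFunLike.congr_fun h0 (Pi.single i 1)
    simp [p, Ne.symm hii] at this
  have hnz : ∀ i, ∃ x ∈ L, x i ≠ 0 := by
    intro i
    by_contra! h
    have h0 := functional_zero L hL (LinearMap.proj i) (fun v hv => by simp [h v hv])
    have := DFunLike.congr_fun h0 (Pi.single i 1)
    simp at this
  have hstruct : ∀ j, (∃ i, (∀ x, g x j = x i) ∧ ∀ v ∈ L', v j = v (m i)) ∨
        ((∀ x, g x j = 0) ∧ ∀ v ∈ L', v j = 0) := by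
    intro j
    rcases hg.2 j with ⟨i, h⟩ | h
    · left
      refine ⟨i, h, fun v hv => ?_⟩
      obtain ⟨x, -, rfl⟩ := hex v hv
      rw [h, hm]
    · right
      refine ⟨h, fun v hv => ?_⟩
      obtain ⟨x, -, rfl⟩ := hex v hv
      exact h x
  refine ⟨m, ?_, ?_, hstruct⟩
  · intro a b hab
    have := ho a b hab
    rw [← Finset.coe_min' (hne a), ← Finset.coe_min' (hne b)] at this
    exact WithTop.coe_lt_coe.mp this
  · have hin : ∀ i, m i ∈ repSet L' := by
      intro i
      obtain ⟨x, hx, hxi⟩ := hnz i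
      refine ⟨⟨g x, hmem x hx, by rwa [hm]⟩, ?_⟩
      intro j hj
      by_contra! hcon
      rcases hg.2 j with ⟨i', h⟩ | h
      · have : i' = i := hsep _ _ fun y hy => by
          have := hcon _ (hmem y hy)
          rwa [h, hm] at this
        subst this
        exact absurd (hmle _ _ h) (not_le.mpr hj)
      · have := hcon _ (hmem x hx)
        rw [h, hm] at this
        exact hxi this.symm
    ext j
    constructor
    · rintro ⟨i, rfl⟩
      exact hin i
    · intro hj
      rcases hstruct j with ⟨i, -, h⟩ | ⟨-, h⟩
      · exact ⟨i, (repSet_sep hj (hin i) h).symm⟩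
      · obtain ⟨v, hv, hne⟩ := hj.1
        exact absurd (h v hv) hne

lemma solution_exists {n k : ℕ} (L' : Submodule ℤ (Fin (n + k) → ℤ)) (hmul : IsMulClosed L')
    (hrank : Module.finrank ℤ L' = n) :
    ∃ p : ((Fin n → ℤ) → (Fin (n + k) → ℤ)) × Submodule ℤ (Fin n → ℤ),
      IsAcceptable p.1 ∧ IsOrdered p.1 ∧ IsMulClosed p.2 ∧
      Module.finrank ℤ p.2 = n ∧
      (L' : Set (Fin (n + k) → ℤ)) = p.1 '' (p.2 : Set (Fin n → ℤ)) := by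
  classical
  have hcard : (repSet L').toFinset.card = n := by
    rw [Set.toFinset_card, ← Nat.card_eq_fintype_card, card_repSet L' hmul, hrank]
  let e := (repSet L').toFinset.orderEmbOfFin hcard
  have he : ∀ i, e i ∈ repSet L' := fun i => by
    exact Set.mem_toFinset.mp ((repSet L').toFinset.orderEmbOfFin_mem hcard i)
  have hsurj : ∀ a ∈ repSet L', ∃ i, e i = a := fun a ha => by
    have : a ∈ Set.range e := by
      rw [Finset.range_orderEmbOfFin]; simpa using ha
    exact this
  let P : Fin (n + k) → Prop := fun j => ∃ i, ∀ v ∈ L', v j = v (e i)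
  let g : (Fin n → ℤ) → (Fin (n + k) → ℤ) := fun x j =>
    if h : P j then x h.choose else 0
  have hg1 : ∀ j i, (∀ v ∈ L', v j = v (e i)) → ∀ x, g x j = x i := by
    intro j i h x
    have hP : P j := ⟨i, h⟩
    have hc := hP.choose_spec
    have : hP.choose = i := e.injective (repSet_sep (he _) (he _) fun v hv => by
      rw [← hc v hv, h v hv])
    simp only [g, dif_pos hP, this]
  have hg2 : ∀ j, ¬ P j → ∀ x, g x j = 0 := fun j h x => by simp only [g, dif_neg h]
  have hge : ∀ i x, g x (e i) = x i := fun i => hg1 _ _ fun _ _ => rfl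
  have hz : ∀ j, ¬ P j → ∀ v ∈ L', v j = 0 := by
    intro j h
    by_contra! hcon
    obtain ⟨a, ha, -, hav⟩ := exists_rep L' j hcon
    obtain ⟨i, rfl⟩ := hsurj a ha
    exact h ⟨i, hav⟩
  let r : (Fin (n + k) → ℤ) →ₗ[ℤ] (Fin n → ℤ) := LinearMap.funLeft ℤ ℤ e
  have hr : ∀ v i, r v i = v (e i) := fun _ _ => rfl
  have hgr : ∀ v ∈ L', g (r v) = v := by
    intro v hv
    funext j
    by_cases h : P j
    · obtain ⟨i, hi⟩ := h
      rw [hg1 j i hi, hr, hi v hv]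
    · rw [hg2 j h, hz j h v hv]
  have hmin : ∀ i, (coordSet g i).min = (e i : WithTop (Fin (n + k))) := by
    intro i
    apply le_antisymm
    · exact Finset.min_le (by simpa [coordSet] using hge i)
    · apply Finset.le_min
      intro j hj
      have hj : ∀ x, g x j = x i := by simpa [coordSet] using hj
      apply WithTop.coe_le_coe.mpr
      have hjv : ∀ v ∈ L', v j = v (e i) := fun v hv => by
        have := hj (r v)
        rwa [hgr v hv, hr] at this
      by_contra! hlt
      obtain ⟨v, hv, hne⟩ := (he i).2 j hlt
      exact hne (hjv v hv)
  refine ⟨(g, L'.map r), ⟨?_, ?_⟩, ?_, ?_, ?_, ?_⟩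
  · intro x y h
    funext i
    rw [← hge i x, ← hge i y]
    exact congrFun h _
  · intro j
    by_cases h : P j
    · obtain ⟨i, hi⟩ := h
      exact Or.inl ⟨i, hg1 j i hi⟩
    · exact Or.inr (hg2 j h)
  · intro a b hab
    simp only [hmin]
    exact WithTop.coe_lt_coe.mpr (e.strictMono hab)
  · rintro _ ⟨u, hu, rfl⟩ _ ⟨v, hv, rfl⟩
    exact ⟨u * v, hmul u hu v hv, rfl⟩
  · have hinj : Function.Injective (r.domRestrict L') := by
      intro u v h
      apply Subtype.ext
      rw [← hgr u u.2, ← hgr v v.2]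
      exact congrArg g h
    have := LinearMap.finrank_range_of_inj hinj
    rw [LinearMap.range_domRestrict] at this
    exact this.trans hrank
  · ext v
    constructor
    · intro hv
      exact ⟨r v, ⟨v, hv, rfl⟩, hgr v hv⟩
    · rintro ⟨_, ⟨u, hu, rfl⟩, rfl⟩
      show g (r u) ∈ L'
      rw [hgr u hu]; exact hu

/-- Every multiplicative sublattice of co-rank `k` in `ℤ^{n+k}` is the image of a full
rank multiplicative sublattice of `ℤ^n` under an ordered acceptable map, and the
ordered acceptable map and the sublattice are uniquely determined. -/
theorem rigidity_ordered_acceptable_unique (n k : ℕ)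
    (L' : Submodule ℤ (Fin (n + k) → ℤ)) (hmul : IsMulClosed L')
    (hrank : Module.finrank ℤ L' = n) :
    ∃! p : ((Fin n → ℤ) → (Fin (n + k) → ℤ)) × Submodule ℤ (Fin n → ℤ),
      IsAcceptable p.1 ∧ IsOrdered p.1 ∧ IsMulClosed p.2 ∧
      Module.finrank ℤ p.2 = n ∧
      (L' : Set (Fin (n + k) → ℤ)) = p.1 '' (p.2 : Set (Fin n → ℤ)) := by
  apply existsUnique_of_exists_of_unique (solution_exists L' hmul hrank)
  rintro ⟨g₁, L₁⟩ ⟨g₂, L₂⟩ ⟨ha₁, ho₁, -, hr₁, hi₁⟩ ⟨ha₂, ho₂, -, hr₂, hi₂⟩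
  obtain ⟨m₁, hs₁, hR₁, hj₁⟩ := solution_struct L' g₁ L₁ ha₁ ho₁ hr₁ hi₁
  obtain ⟨m₂, hs₂, hR₂, hj₂⟩ := solution_struct L' g₂ L₂ ha₂ ho₂ hr₂ hi₂
  have hm : m₁ = m₂ := (hs₁.range_inj hs₂).mp (hR₁.trans hR₂.symm)
  subst hm
  have hin : ∀ i, m₁ i ∈ repSet L' := fun i => hR₁ ▸ Set.mem_range_self i
  have hg : g₁ = g₂ := by
    funext x j
    rcases hj₁ j with ⟨i, h, hv⟩ | ⟨h, hv⟩ <;> rcases hj₂ j with ⟨i', h', hv'⟩ | ⟨h', hv'⟩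
    · have : i = i' := hs₁.injective (repSet_sep (hin i) (hin i') fun v hvL => by
        rw [← hv v hvL, hv' v hvL])
      rw [h, h', this]
    · obtain ⟨v, hvL, hne⟩ := (hin i).1
      exact absurd ((hv v hvL).symm.trans (hv' v hvL)) hne
    · obtain ⟨v, hvL, hne⟩ := (hin i').1
      exact absurd ((hv' v hvL).symm.trans (hv v hvL)) hne
    · rw [h, h']
  subst hg
  have hL : L₁ = L₂ := SetLike.coe_injective (ha₁.1.image_injective (hi₁.symm.trans hi₂))
  rw [hL]
end

section
/- For every n ≥ 2 and every r ≥ 1, the number of subrings of ℤ^n containing the identity (1,…,1) and of index r equals the number of multiplicative sublattices of ℤ^{n−1} of full rank n−1 and index r; that is, f_n(r) = φ_{n−1}(r). -/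
/-- `f n r` is the number of subrings of `ℤ^n` (with identity `(1,…,1)`) of index `r`. -/
noncomputable def subringCount (n r : ℕ) : ℕ :=
  Nat.card {R : Subring (Fin n → ℤ) // R.toAddSubgroup.index = r}

/-- `phi m r` is the number of multiplicative sublattices of `ℤ^m` of full rank `m`
and index `r`. -/
noncomputable def phi (m r : ℕ) : ℕ :=
  Nat.card {L : Submodule ℤ (Fin m → ℤ) //
    IsMulClosed L ∧ Module.finrank ℤ L = m ∧ L.toAddSubgroup.index = r}

/-- The map `x ↦ (x₁ - x₀, …, x_m - x₀)`. -/
def diffHom (m : ℕ) : (Fin (m + 1) → ℤ) →+ (Fin m → ℤ) where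
  toFun x := fun i => x i.succ - x 0
  map_zero' := by ext i; simp
  map_add' x y := by ext i; simp; ring

lemma diffHom_apply (m : ℕ) (x : Fin (m + 1) → ℤ) (i : Fin m) :
    diffHom m x i = x i.succ - x 0 := rfl

lemma diffHom_cons (m : ℕ) (v : Fin m → ℤ) :
    diffHom m (Fin.cons 0 v : Fin (m + 1) → ℤ) = v := by
  ext i; simp [diffHom_apply]

lemma diffHom_surjective (m : ℕ) : Function.Surjective (diffHom m) :=
  fun v => ⟨Fin.cons 0 v, diffHom_cons m v⟩

lemma cons_diffHom (m : ℕ) (x : Fin (m + 1) → ℤ) :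
    (Fin.cons 0 (diffHom m x) : Fin (m + 1) → ℤ) = x - ((x 0 : ℤ) : Fin (m + 1) → ℤ) := by
  ext i
  refine Fin.cases ?_ (fun j => ?_) i <;> simp [diffHom_apply]

/-- The subring attached to a multiplicative sublattice. -/
def toSubring' {m : ℕ} (L : Submodule ℤ (Fin m → ℤ)) (hL : IsMulClosed L) :
    Subring (Fin (m + 1) → ℤ) :=
  { L.toAddSubgroup.comap (diffHom m) with
    one_mem' := by
      change diffHom m 1 ∈ L
      have : diffHom m 1 = 0 := by ext i; simp [diffHom_apply]
      rw [this]; exact L.zero_mem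
    mul_mem' := by
      intro x y hx hy
      change diffHom m x ∈ L at hx
      change diffHom m y ∈ L at hy
      change diffHom m (x * y) ∈ L
      have : diffHom m (x * y) = x 0 • diffHom m y + y 0 • diffHom m x
          + diffHom m x * diffHom m y := by
        ext i; simp [diffHom_apply]; ring
      rw [this]
      exact L.add_mem (L.add_mem (L.smul_mem _ hy) (L.smul_mem _ hx)) (hL _ hx _ hy) }

lemma mem_toSubring' {m : ℕ} (L : Submodule ℤ (Fin m → ℤ)) (hL : IsMulClosed L)
    (x : Fin (m + 1) → ℤ) : x ∈ toSubring' L hL ↔ diffHom m x ∈ L := Iff.rfl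

/-- The sublattice attached to a subring. -/
def toLattice {m : ℕ} (R : Subring (Fin (m + 1) → ℤ)) : Submodule ℤ (Fin m → ℤ) where
  carrier := {v | (Fin.cons 0 v : Fin (m + 1) → ℤ) ∈ R}
  zero_mem' := by
    have : (Fin.cons 0 (0 : Fin m → ℤ) : Fin (m + 1) → ℤ) = 0 := by
      ext i; refine Fin.cases ?_ (fun j => ?_) i <;> simp
    simp only [Set.mem_ofPred_eq, this]; exact R.zero_mem
  add_mem' := by
    intro u v hu hv
    have : (Fin.cons 0 (u + v) : Fin (m + 1) → ℤ) = Fin.cons 0 u + Fin.cons 0 v := by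
      ext i; refine Fin.cases ?_ (fun j => ?_) i <;> simp
    simp only [Set.mem_ofPred_eq, this]; exact R.add_mem hu hv
  smul_mem' := by
    intro c v hv
    have : (Fin.cons 0 (c • v) : Fin (m + 1) → ℤ) = c • Fin.cons 0 v := by
      ext i; refine Fin.cases ?_ (fun j => ?_) i <;> simp
    simp only [Set.mem_ofPred_eq, this]; exact zsmul_mem hv c

lemma mem_toLattice {m : ℕ} (R : Subring (Fin (m + 1) → ℤ)) (v : Fin m → ℤ) :
    v ∈ toLattice R ↔ (Fin.cons 0 v : Fin (m + 1) → ℤ) ∈ R := Iff.rfl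

lemma toLattice_mul {m : ℕ} (R : Subring (Fin (m + 1) → ℤ)) : IsMulClosed (toLattice R) := by
  intro u hu v hv
  rw [mem_toLattice] at *
  have : (Fin.cons 0 (u * v) : Fin (m + 1) → ℤ) = Fin.cons 0 u * Fin.cons 0 v := by
    ext i; refine Fin.cases ?_ (fun j => ?_) i <;> simp
  rw [this]; exact R.mul_mem hu hv

lemma toSubring'_toLattice {m : ℕ} (R : Subring (Fin (m + 1) → ℤ)) :
    toSubring' (toLattice R) (toLattice_mul R) = R := by
  ext x
  rw [mem_toSubring', mem_toLattice, cons_diffHom]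
  have h : ((x 0 : ℤ) : Fin (m + 1) → ℤ) ∈ R := intCast_mem R _
  constructor
  · intro hx; simpa using R.add_mem hx h
  · intro hx; exact R.sub_mem hx h

lemma toLattice_toSubring' {m : ℕ} (L : Submodule ℤ (Fin m → ℤ)) (hL : IsMulClosed L) :
    toLattice (toSubring' L hL) = L := by
  ext v
  rw [mem_toLattice, mem_toSubring', diffHom_cons]

lemma index_toSubring' {m : ℕ} (L : Submodule ℤ (Fin m → ℤ)) (hL : IsMulClosed L) :
    (toSubring' L hL).toAddSubgroup.index = L.toAddSubgroup.index :=
  AddSubgroup.index_comap_of_surjective L.toAddSubgroup (diffHom_surjective m)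

lemma finrank_of_index {m : ℕ} (L : Submodule ℤ (Fin m → ℤ))
    (h : L.toAddSubgroup.index ≠ 0) : Module.finrank ℤ L = m := by
  have hf : L.toAddSubgroup.FiniteIndex := ⟨h⟩
  have := AddSubgroup.finrank_eq_of_finiteIndex L.toAddSubgroup
  rw [Module.finrank_fin_fun] at this
  exact this

/-- `f_n(r) = φ_{n-1}(r)`. -/
theorem subringCount_eq_phi (n r : ℕ) (hn : 2 ≤ n) (hr : 1 ≤ r) :
    subringCount n r = phi (n - 1) r := by
  obtain ⟨m, rfl⟩ : ∃ m, n = m + 1 := ⟨n - 1, by omega⟩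
  rw [Nat.add_sub_cancel]
  have key : ∀ R : Subring (Fin (m + 1) → ℤ),
      (toLattice R).toAddSubgroup.index = R.toAddSubgroup.index := fun R => by
    rw [← index_toSubring' _ (toLattice_mul R), toSubring'_toLattice]
  refine Nat.card_congr
    { toFun := fun R => ⟨toLattice R.1, toLattice_mul R.1, ?_, (key R.1).trans R.2⟩
      invFun := fun L => ⟨toSubring' L.1 L.2.1, (index_toSubring' _ _).trans L.2.2.2⟩
      left_inv := fun R => Subtype.ext (toSubring'_toLattice R.1)
      right_inv := fun L => Subtype.ext (toLattice_toSubring' L.1 L.2.1) }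
  apply finrank_of_index
  rw [key, R.2]
  omega
end

section
/- If L is a multiplicative sublattice of co-rank 2 in ℤ^4, then there exist a multiplicative sublattice L′ of full rank in ℤ^2 and an acceptable map f : ℤ^2 → ℤ^4 of the form τ ∘ f_j ∘ σ with σ ∈ S_2, τ ∈ S_4 (permutations acting by permuting coordinates) and j ∈ {1,2,3,4}, where f_1(x,y) = (x,y,0,0), f_2(x,y) = (x,y,y,0), f_3(x,y) = (x,y,y,y), f_4(x,y) = (x,x,y,y), such that L = f(L′); furthermore, the cardinality of the torsion subgroup of ℤ^4/L equals the index [ℤ^2 : L′]. -/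
/-- The four basic maps `ℤ² → ℤ⁴`:
`f₁(x,y) = (x,y,0,0)`, `f₂(x,y) = (x,y,y,0)`, `f₃(x,y) = (x,y,y,y)`,
`f₄(x,y) = (x,x,y,y)`. -/
def basicMap : Fin 4 → (Fin 2 → ℤ) → (Fin 4 → ℤ)
  | 0 => fun x => ![x 0, x 1, 0, 0]
  | 1 => fun x => ![x 0, x 1, x 1, 0]
  | 2 => fun x => ![x 0, x 1, x 1, x 1]
  | 3 => fun x => ![x 0, x 0, x 1, x 1]

/-- The value of the coordinate symbol `c`: `x 0`, `x 1` or `0`. -/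
def patVal (x : Fin 2 → ℤ) (c : Fin 3) : ℤ := ![x 0, x 1, 0] c

def patBasic : Fin 4 → Fin 4 → Fin 3
  | 0 => ![0, 1, 2, 2]
  | 1 => ![0, 1, 1, 2]
  | 2 => ![0, 1, 1, 1]
  | 3 => ![0, 0, 1, 1]

def patExt (σ : Equiv.Perm (Fin 2)) (c : Fin 3) : Fin 3 :=
  ![(σ 0).castSucc, (σ 1).castSucc, 2] c

theorem basicMap_eq_patVal (j : Fin 4) (x : Fin 2 → ℤ) (k : Fin 4) :
    basicMap j x k = patVal x (patBasic j k) := by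
  fin_cases j <;> fin_cases k <;> rfl

theorem patVal_perm (σ : Equiv.Perm (Fin 2)) (x : Fin 2 → ℤ) (c : Fin 3) :
    patVal (fun i => x (σ i)) c = patVal x (patExt σ c) := by
  have h : ∀ t : Fin 2, x t = patVal x t.castSucc := by
    intro t; fin_cases t <;> rfl
  fin_cases c
  · exact h (σ 0)
  · exact h (σ 1)
  · rfl

set_option maxRecDepth 100000 in
set_option maxHeartbeats 4000000 in
theorem pattern_normal_form : ∀ c0 c1 c2 c3 : Fin 3, (∃ i, ![c0, c1, c2, c3] i = 0) →
    (∃ j, ![c0, c1, c2, c3] j = 1) →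
    ∃ (j : Fin 4) (σ : Equiv.Perm (Fin 2)) (τ : Equiv.Perm (Fin 4)),
      ∀ k, ![c0, c1, c2, c3] k = patExt σ (patBasic j (τ k)) := by
  decide

theorem exists_minor (L : Submodule ℤ (Fin 4 → ℤ)) (hmul : IsMulClosed L)
    (hrank : Module.finrank ℤ L = 2) :
    ∃ (i j : Fin 4) (D : ℤ) (p q : Fin 4 → ℤ), D ≠ 0 ∧ p ∈ L ∧ q ∈ L ∧
      p i = D ∧ p j = 0 ∧ q i = 0 ∧ q j = D ∧ ∀ x ∈ L, ∀ k, D * x k = x i * p k + x j * q k := by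
  let b := Module.finBasisOfFinrankEq ℤ L hrank
  obtain ⟨u, hu⟩ : ∃ u : Fin 4 → ℤ, u = (b 0 : Fin 4 → ℤ) := ⟨_, rfl⟩
  obtain ⟨v, hv⟩ : ∃ u : Fin 4 → ℤ, u = (b 1 : Fin 4 → ℤ) := ⟨_, rfl⟩
  have huL : u ∈ L := hu ▸ (b 0).2
  have hvL : v ∈ L := hv ▸ (b 1).2
  have hli : ∀ s t : ℤ, s • u + t • v = 0 → s = 0 ∧ t = 0 := by
    have hb : LinearIndependent ℤ ![b 0, b 1] := by
      have h2 : ![b 0, b 1] = b := by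
        funext t; fin_cases t <;> rfl
      rw [h2]
      exact b.linearIndependent
    have := LinearIndependent.pair_iff.1 hb
    intro s t h
    apply this s t
    apply Subtype.ext
    simpa [← hu, ← hv] using h
  have hspan : ∀ x ∈ L, ∃ s t : ℤ, x = s • u + t • v := by
    intro x hx
    refine ⟨b.repr ⟨x, hx⟩ 0, b.repr ⟨x, hx⟩ 1, ?_⟩
    have := congrArg Subtype.val (b.sum_repr ⟨x, hx⟩)
    simp only [Fin.sum_univ_two] at this
    simpa [← hu, ← hv] using this.symm
  have hex : ∃ i j, u i * v j - u j * v i ≠ 0 := by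
    by_contra! hcon
    have hu0 : ∀ i, u i = 0 := by
      intro i
      refine (hli (-v i) (u i) ?_).2
      ext k
      have := hcon i k
      simp only [Pi.add_apply, Pi.smul_apply, smul_eq_mul, Pi.zero_apply]
      linarith
    have := (hli 1 0 (by ext k; simp [hu0 k])).1
    exact one_ne_zero this
  obtain ⟨i, j, hD⟩ := hex
  refine ⟨i, j, u i * v j - u j * v i, v j • u - u j • v, u i • v - v i • u, hD,
    L.sub_mem (L.smul_mem _ huL) (L.smul_mem _ hvL),
    L.sub_mem (L.smul_mem _ hvL) (L.smul_mem _ huL), ?_, ?_, ?_, ?_, ?_⟩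
  · simp; ring
  · simp; ring
  · simp; ring
  · simp; ring
  · intro x hx k
    obtain ⟨s, t, rfl⟩ := hspan x hx
    simp; ring

/-- Every multiplicative sublattice of co-rank `2` in `ℤ⁴` is the image of a full rank
multiplicative sublattice `L'` of `ℤ²` under a map of the form `τ ∘ f_j ∘ σ` with
`σ ∈ S₂`, `τ ∈ S₄` acting by permuting coordinates, and the torsion subgroup of
`ℤ⁴/L` has cardinality `[ℤ² : L']`. -/
theorem corank_two_in_Z4 (L : Submodule ℤ (Fin 4 → ℤ)) (hmul : IsMulClosed L)
    (hrank : Module.finrank ℤ L = 2) :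
    ∃ L' : Submodule ℤ (Fin 2 → ℤ), IsMulClosed L' ∧ Module.finrank ℤ L' = 2 ∧
      ∃ (σ : Equiv.Perm (Fin 2)) (τ : Equiv.Perm (Fin 4)) (j : Fin 4),
        (L : Set (Fin 4 → ℤ)) =
          ((fun w : Fin 4 → ℤ => fun i => w (τ i)) ∘ basicMap j ∘
              fun x : Fin 2 → ℤ => fun i => x (σ i)) '' (L' : Set (Fin 2 → ℤ)) ∧
        Nat.card (Submodule.torsion ℤ ((Fin 4 → ℤ) ⧸ L)) = L'.toAddSubgroup.index := by
  obtain ⟨i, j, D, p, q, hD, hp, hq, hpi, hpj, hqi, hqj, hx⟩ := exists_minor L hmul hrank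
  have hcase : ∀ k, ∃ c : Fin 3, (∀ x ∈ L, x k = patVal ![x i, x j] c) ∧
      (k = i → c = 0) ∧ (k = j → c = 1) := by
    intro k
    have h1 := hx _ (hmul p hp p hp) k
    have h2 := hx _ (hmul q hq q hq) k
    have h3 := hx _ (hmul p hp q hq) k
    simp only [Pi.mul_apply, hpi, hpj, hqi, hqj, mul_zero, zero_mul, add_zero, zero_add] at h1 h2 h3
    have hpk : p k = 0 ∨ p k = D := by
      have : D * (p k * (p k - D)) = 0 := by linarith
      simpa [hD, sub_eq_zero] using this
    have hqk : q k = 0 ∨ q k = D := by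
      have : D * (q k * (q k - D)) = 0 := by linarith
      simpa [hD, sub_eq_zero] using this
    have hpq : p k = 0 ∨ q k = 0 := by simpa [hD] using h3
    have hki : k = i → p k = D ∧ q k = 0 := by rintro rfl; exact ⟨hpi, hqi⟩
    have hkj : k = j → p k = 0 ∧ q k = D := by rintro rfl; exact ⟨hpj, hqj⟩
    rcases hpk with hpk | hpk
    · rcases hqk with hqk | hqk
      · refine ⟨2, fun x hxL => ?_, fun h => ?_, fun h => ?_⟩
        · have := hx x hxL k
          simpa [hpk, hqk, hD, patVal] using this
        · exact absurd ((hki h).1.symm.trans hpk) hD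
        · exact absurd ((hkj h).2.symm.trans hqk) hD
      · refine ⟨1, fun x hxL => ?_, fun h => ?_, fun h => rfl⟩
        · have := hx x hxL k
          rw [hpk, hqk, mul_zero, zero_add, mul_comm (x j)] at this
          exact mul_left_cancel₀ hD this
        · exact absurd ((hki h).1.symm.trans hpk) hD
    · have hq_zero : q k = 0 := hpq.resolve_left (by rw [hpk]; exact hD)
      refine ⟨0, fun x hxL => ?_, fun h => rfl, fun h => ?_⟩
      · have := hx x hxL k
        rw [hpk, hq_zero, mul_zero, add_zero, mul_comm (x i)] at this
        exact mul_left_cancel₀ hD this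
      · exact absurd (hpk.symm.trans (hkj h).1) hD
  choose c hc hci hcj using hcase
  have hci := hci i rfl
  have hcj := hcj j rfl
  let pr : (Fin 4 → ℤ) →ₗ[ℤ] (Fin 2 → ℤ) := LinearMap.funLeft ℤ ℤ ![i, j]
  have hpr : ∀ x, pr x = ![x i, x j] := by
    intro x; ext t; fin_cases t <;> rfl
  let g : (Fin 2 → ℤ) →ₗ[ℤ] (Fin 4 → ℤ) :=
    { toFun := fun x k => patVal x (c k)
      map_add' := by
        intro x y; ext k
        change _ = patVal x (c k) + patVal y (c k)
        generalize c k = e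
        fin_cases e <;> simp [patVal]
      map_smul' := by
        intro a y; ext k
        change _ = a * patVal y (c k)
        generalize c k = e
        fin_cases e <;> simp [patVal] }
  have hgk : ∀ x k, g x k = patVal x (c k) := fun _ _ => rfl
  have hprg : ∀ y, pr (g y) = y := by
    intro y; rw [hpr, hgk, hgk, hci, hcj]; ext t; fin_cases t <;> rfl
  have hgpr : ∀ x ∈ L, g (pr x) = x := by
    intro x hxL; ext k; rw [hgk, hpr, ← hc k x hxL]
  have hmem : ∀ y, y ∈ L.map pr ↔ g y ∈ L := by
    intro y
    constructor
    · rintro ⟨x, hxL, rfl⟩; rw [hgpr x hxL]; exact hxL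
    · intro h; exact ⟨g y, h, hprg y⟩
  have hDmem : ∀ y, D • g y ∈ L := by
    intro y
    have : y 0 • p + y 1 • q ∈ L := L.add_mem (L.smul_mem _ hp) (L.smul_mem _ hq)
    convert this using 1
    rw [← hgpr _ this, hpr, ← map_smul]
    congr 1
    ext t; fin_cases t <;> simp [hpi, hpj, hqi, hqj, mul_comm]
  refine ⟨L.map pr, ?_, ?_, ?_⟩
  · rintro _ ⟨x, hxL, rfl⟩ _ ⟨y, hyL, rfl⟩
    exact ⟨x * y, hmul x hxL y hyL, rfl⟩
  · refine Eq.trans (LinearEquiv.finrank_eq (LinearEquiv.ofBijective (pr.submoduleMap L)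
      ⟨?_, pr.submoduleMap_surjective L⟩)).symm hrank
    intro x y hxy
    have h : pr x = pr y := congrArg Subtype.val hxy
    apply Subtype.ext
    rw [← hgpr x x.2, ← hgpr y y.2, h]
  · have hcc : c = ![c 0, c 1, c 2, c 3] := by ext t; fin_cases t <;> rfl
    obtain ⟨jj, σ, τ, hτ⟩ := pattern_normal_form (c 0) (c 1) (c 2) (c 3)
      ⟨i, by rw [← hcc, hci]⟩ ⟨j, by rw [← hcc, hcj]⟩
    rw [← hcc] at hτ
    have hg : ((fun w : Fin 4 → ℤ => fun i => w (τ i)) ∘ basicMap jj ∘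
              fun x : Fin 2 → ℤ => fun i => x (σ i)) = g := by
      ext x k
      simp only [Function.comp]
      rw [basicMap_eq_patVal, patVal_perm, hgk, hτ]
    refine ⟨σ, τ, jj, ?_, ?_⟩
    · rw [hg]
      ext x
      constructor
      · intro h; exact ⟨pr x, ⟨x, h, rfl⟩, hgpr x h⟩
      · rintro ⟨y, hy, rfl⟩; exact (hmem y).1 hy
    · let φ : (Fin 2 → ℤ) →ₗ[ℤ] ((Fin 4 → ℤ) ⧸ L) := L.mkQ ∘ₗ g
      have hker : LinearMap.ker φ = L.map pr := by
        ext y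
        rw [hmem]
        simp [φ]
      have hrange : LinearMap.range φ = Submodule.torsion ℤ ((Fin 4 → ℤ) ⧸ L) := by
        ext z
        rw [Submodule.mem_torsion_iff]
        constructor
        · rintro ⟨y, rfl⟩
          refine ⟨⟨D, mem_nonZeroDivisors_of_ne_zero hD⟩, ?_⟩
          change D • L.mkQ (g y) = 0
          rw [← map_smul]
          simpa using hDmem y
        · rintro ⟨⟨a, ha⟩, hz⟩
          have ha0 : a ≠ 0 := nonZeroDivisors.ne_zero ha
          obtain ⟨x, rfl⟩ := L.mkQ_surjective z
          change a • L.mkQ x = 0 at hz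
          rw [← map_smul] at hz
          have hxL : a • x ∈ L := by simpa using hz
          refine ⟨pr x, ?_⟩
          change L.mkQ (g (pr x)) = _
          congr 1
          have := hgpr _ hxL
          rw [map_smul, map_smul] at this
          exact smul_right_injective _ ha0 this
      rw [← hrange, ← hker]
      exact (Nat.card_congr φ.quotKerEquivRange.toEquiv).symm
end
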